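/- Let (φ, μ, θ, u, p) be smooth spatially periodic fields on (0,T) × ℝ^d with θ > 0 everywhere satisfying the variational formulation (V1)–(V5). Then for every t ∈ (0,T), (d/dt) ∫_Ω s dx = ∫_Ω [M(μ/θ)² + K|∇(1/θ)|² + (η/θ)|Du|²] dx + ∫_Ω (Q/θ) dx, the first term on the right being nonnegative; this follows using only the test function ω = 1 in (V3). -/

import Mathlib

/-!
Testing the entropy balance with the constant function `ω = 1` kills every term containing `∇ω`,
and `K / θ² |∇θ|² / θ² = K |∇(1/θ)|²` pointwise, so the right-hand side of the entropy balance is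
the claimed production plus `∫ Q / θ`; the production is an integral of a nonnegative function.

The analytic content is that the integral of the entropy may be differentiated under the integral
sign. The entropy density only involves `G` and one derivative of `f`, so it is jointly `C¹` in
`(t, x)` (`contDiff_entS`), because `∂_θ f` is `C¹` on `θ > 0` (`contDiffOn_deriv_snd`). On the
compact box the time derivative is then bounded locally uniformly in time, and dominated
convergence applies (`deriv_setIntegral_of_contDiff`). Splitting the integrals needs integrability
on the box, which follows from continuity.
-/

open MeasureTheory

noncomputable section

/-- `i`-th spatial partial derivative of a scalar field. -/
def pd {d : ℕ} (i : Fin d) (g : (Fin d → ℝ) → ℝ) (x : Fin d → ℝ) : ℝ :=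
  fderiv ℝ g x (Pi.single i 1)

/-- Spatial gradient of a scalar field. -/
def grad {d : ℕ} (g : (Fin d → ℝ) → ℝ) (x : Fin d → ℝ) : Fin d → ℝ :=
  fun i => pd i g x

/-- Divergence of a vector field. -/
def divg {d : ℕ} (u : (Fin d → ℝ) → Fin d → ℝ) (x : Fin d → ℝ) : ℝ :=
  ∑ i, pd i (fun y => u y i) x

/-- Euclidean dot product. -/
def dot {d : ℕ} (a b : Fin d → ℝ) : ℝ := ∑ i, a i * b i

/-- Time derivative of a time-dependent scalar field. -/
def dt {d : ℕ} (g : ℝ → (Fin d → ℝ) → ℝ) (t : ℝ) (x : Fin d → ℝ) : ℝ :=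
  deriv (fun s => g s x) t

/-- The box `Ω = [0, L₁] × ⋯ × [0, L_d]`. -/
def box {d : ℕ} (L : Fin d → ℝ) : Set (Fin d → ℝ) :=
  Set.univ.pi fun i => Set.Icc 0 (L i)

/-- Spatial periodicity with periods `L`. -/
def SpacePeriodic {d : ℕ} (L : Fin d → ℝ) (g : (Fin d → ℝ) → ℝ) : Prop :=
  ∀ x i, g (x + Pi.single i (L i)) = g x

/-- Entropy density `s = -G(∇φ) - ∂_θ f(φ, θ)`. -/
def entS {d : ℕ} (G : (Fin d → ℝ) → ℝ) (f : ℝ → ℝ → ℝ)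
    (φ θ : ℝ → (Fin d → ℝ) → ℝ) (t : ℝ) (x : Fin d → ℝ) : ℝ :=
  -G (grad (φ t) x) - deriv (f (φ t x)) (θ t x)

/-- Internal energy density `e = f(φ, θ) - θ ∂_θ f(φ, θ)`. -/
def intE {d : ℕ} (f : ℝ → ℝ → ℝ) (φ θ : ℝ → (Fin d → ℝ) → ℝ)
    (t : ℝ) (x : Fin d → ℝ) : ℝ :=
  f (φ t x) (θ t x) - θ t x * deriv (f (φ t x)) (θ t x)

/-- Total energy density `e_tot = e + |u|²/2`. -/
def totE {d : ℕ} (f : ℝ → ℝ → ℝ) (φ θ : ℝ → (Fin d → ℝ) → ℝ)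
    (u : ℝ → (Fin d → ℝ) → Fin d → ℝ) (t : ℝ) (x : Fin d → ℝ) : ℝ :=
  intE f φ θ t x + (1 / 2) * ∑ i, (u t x i) ^ 2

/-- Chemical potential `μ = -θ div(∇G(∇φ)) + ∂_φ f(φ, θ)`. -/
def chemMu {d : ℕ} (G : (Fin d → ℝ) → ℝ) (f : ℝ → ℝ → ℝ)
    (φ θ : ℝ → (Fin d → ℝ) → ℝ) (t : ℝ) (x : Fin d → ℝ) : ℝ :=
  -θ t x * divg (fun y => grad G (grad (φ t) y)) x
    + deriv (fun a => f a (θ t x)) (φ t x)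

/-- Korteweg stress `σ̃ᵢⱼ = θ (∇G(∇φ))ᵢ ∂ⱼφ`. -/
def korteweg {d : ℕ} (G : (Fin d → ℝ) → ℝ)
    (φ θ : ℝ → (Fin d → ℝ) → ℝ) (t : ℝ) (x : Fin d → ℝ) (i j : Fin d) : ℝ :=
  θ t x * grad G (grad (φ t) x) i * pd j (φ t) x

/-- Symmetric gradient `Dw = (∇w + (∇w)ᵀ)/2` of a (spatial) vector field. -/
def symGrad {d : ℕ} (w : (Fin d → ℝ) → Fin d → ℝ) (x : Fin d → ℝ) (i j : Fin d) : ℝ :=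
  (pd i (fun y => w y j) x + pd j (fun y => w y i) x) / 2

/-- Differentiation under the integral sign over a compact set, for a jointly `C¹` integrand. -/
theorem deriv_setIntegral_of_contDiff {d : ℕ} {g : ℝ → (Fin d → ℝ) → ℝ}
    (hg : ContDiff ℝ 1 fun q : ℝ × (Fin d → ℝ) => g q.1 q.2) {S : Set (Fin d → ℝ)}
    (hS : IsCompact S) (t : ℝ) :
    deriv (fun s => ∫ x in S, g s x) t = ∫ x in S, dt g t x := by
  have hdiff : ∀ s x, HasDerivAt (fun s => g s x)
      (fderiv ℝ (fun q : ℝ × (Fin d → ℝ) => g q.1 q.2) (s, x) (1, 0)) s := fun s x =>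
    ((hg.differentiable (by norm_num) (s, x)).hasFDerivAt).comp_hasDerivAt
      (f := fun s : ℝ => (s, x)) s ((hasDerivAt_id s).prodMk (hasDerivAt_const s x))
  have hcont : Continuous fun q : ℝ × (Fin d → ℝ) =>
      fderiv ℝ (fun q : ℝ × (Fin d → ℝ) => g q.1 q.2) q (1, 0) :=
    (hg.continuous_fderiv (by norm_num)).clm_apply continuous_const
  have hgx : ∀ s, Continuous (g s) := fun s =>
    hg.continuous.comp (f := fun x => (s, x)) (by fun_prop)
  obtain ⟨C, hC⟩ := ((isCompact_Icc (a := t - 1) (b := t + 1)).prod hS).exists_bound_of_continuousOn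
    hcont.continuousOn
  have key := (hasDerivAt_integral_of_dominated_loc_of_deriv_le (μ := volume.restrict S)
    (F := g) (bound := fun _ => C)
    (F' := fun s x => fderiv ℝ (fun q : ℝ × (Fin d → ℝ) => g q.1 q.2) (s, x) (1, 0))
    (Icc_mem_nhds (a := t - 1) (b := t + 1) (by linarith) (by linarith))
    (Filter.Eventually.of_forall fun s => (hgx s).aestronglyMeasurable)
    ((hgx t).continuousOn.integrableOn_compact hS)
    (hcont.comp (f := fun x => (t, x)) (by fun_prop)).aestronglyMeasurable
    ((ae_restrict_iff' hS.measurableSet).2 (Filter.Eventually.of_forall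
      fun x hx s hs => hC (s, x) ⟨hs, hx⟩))
    (continuousOn_const.integrableOn_compact hS)
    (Filter.Eventually.of_forall fun x s _ => hdiff s x)).2
  rw [key.deriv]
  exact integral_congr_ae (Filter.Eventually.of_forall fun x => ((hdiff t x).deriv).symm)

/-- The spatial partial derivatives of a jointly smooth field are jointly smooth. -/
theorem contDiff_pd {d : ℕ} {g : ℝ → (Fin d → ℝ) → ℝ}
    (hg : ContDiff ℝ (⊤ : ℕ∞) fun q : ℝ × (Fin d → ℝ) => g q.1 q.2) (i : Fin d) :
    ContDiff ℝ (⊤ : ℕ∞) fun q : ℝ × (Fin d → ℝ) => pd i (g q.1) q.2 := by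
  have h : (fun q : ℝ × (Fin d → ℝ) => pd i (g q.1) q.2) = fun q =>
      fderiv ℝ (fun q : ℝ × (Fin d → ℝ) => g q.1 q.2) q (0, Pi.single i 1) := by
    funext q
    have h1 : HasFDerivAt (fun x => g q.1 x) _ q.2 :=
      ((hg.differentiable (by simp) (q.1, q.2)).hasFDerivAt).comp
        (f := fun x : Fin d → ℝ => (q.1, x)) q.2
        ((hasFDerivAt_const q.1 q.2).prodMk (hasFDerivAt_id q.2))
    simp only [pd]
    rw [show g q.1 = fun x => g q.1 x from rfl, h1.fderiv]
    simp
  rw [h]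
  exact (hg.fderiv_right (m := (⊤ : ℕ∞)) (by simp)).clm_apply contDiff_const

/-- `∂_θ f` is jointly `C¹` on `θ > 0` when `f` is `C²` there. -/
theorem contDiffOn_deriv_snd {f : ℝ → ℝ → ℝ}
    (hf : ContDiffOn ℝ 2 (fun q : ℝ × ℝ => f q.1 q.2) (Set.univ ×ˢ Set.Ioi 0)) :
    ContDiffOn ℝ 1 (fun q : ℝ × ℝ => deriv (f q.1) q.2) (Set.univ ×ˢ Set.Ioi 0) := by
  have ho : IsOpen (Set.univ ×ˢ Set.Ioi 0 : Set (ℝ × ℝ)) := isOpen_univ.prod isOpen_Ioi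
  refine ((hf.fderiv_of_isOpen ho (m := 1) (by norm_num)).clm_apply
    (contDiffOn_const (c := ((0 : ℝ), (1 : ℝ))))).congr fun q hq => ?_
  have h1 := ((hf.contDiffAt (ho.mem_nhds hq)).differentiableAt (by norm_num)).hasFDerivAt
  exact (h1.comp_hasDerivAt (f := fun b : ℝ => (q.1, b)) q.2
    ((hasDerivAt_const q.2 q.1).prodMk (hasDerivAt_id q.2))).deriv

theorem contDiff_entS {d : ℕ} {G : (Fin d → ℝ) → ℝ} (hG : ContDiff ℝ 2 G) {f : ℝ → ℝ → ℝ}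
    (hf : ContDiffOn ℝ 2 (fun q : ℝ × ℝ => f q.1 q.2) (Set.univ ×ˢ Set.Ioi 0))
    {φ θ : ℝ → (Fin d → ℝ) → ℝ}
    (hφ : ContDiff ℝ (⊤ : ℕ∞) fun q : ℝ × (Fin d → ℝ) => φ q.1 q.2)
    (hθ : ContDiff ℝ (⊤ : ℕ∞) fun q : ℝ × (Fin d → ℝ) => θ q.1 q.2)
    (hθpos : ∀ t x, 0 < θ t x) :
    ContDiff ℝ 1 fun q : ℝ × (Fin d → ℝ) => entS G f φ θ q.1 q.2 := by
  have hle : (1 : WithTop ℕ∞) ≤ ((⊤ : ℕ∞) : WithTop ℕ∞) := by exact_mod_cast le_top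
  have hgrad : ContDiff ℝ 1 fun q : ℝ × (Fin d → ℝ) => grad (φ q.1) q.2 :=
    contDiff_pi.2 fun i => (contDiff_pd hφ i).of_le hle
  exact ((hG.of_le (by norm_num)).comp hgrad).neg.sub
    ((contDiffOn_deriv_snd hf).comp_contDiff ((hφ.of_le hle).prodMk (hθ.of_le hle))
      fun q => ⟨trivial, hθpos q.1 q.2⟩)

theorem isCompact_box {d : ℕ} (L : Fin d → ℝ) : IsCompact (box L) :=
  isCompact_univ_pi fun _ => isCompact_Icc

theorem pd_inv {d : ℕ} {g : (Fin d → ℝ) → ℝ} {x : Fin d → ℝ} (hg : DifferentiableAt ℝ g x)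
    (hx : g x ≠ 0) (i : Fin d) : pd i (fun z => (g z)⁻¹) x = -pd i g x / g x ^ 2 := by
  have h : HasFDerivAt (fun z => (g z)⁻¹) _ x :=
    (hasDerivAt_inv hx).comp_hasFDerivAt x hg.hasFDerivAt
  simp only [pd, h.fderiv]
  simp
  ring

/-- entropy production for solutions of the variational formulation (V1)-(V5). -/
theorem variational_entropy_production
    {d : ℕ} (hd : d = 1 ∨ d = 2 ∨ d = 3)
    (T : ℝ) (hT : 0 < T) (L : Fin d → ℝ) (hL : ∀ i, 0 < L i)
    (G : (Fin d → ℝ) → ℝ) (hG : ContDiff ℝ 2 G)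
    (f : ℝ → ℝ → ℝ)
    (hf : ContDiffOn ℝ 2 (fun q : ℝ × ℝ => f q.1 q.2) (Set.univ ×ˢ Set.Ioi 0))
    (M K η : ℝ → ℝ → ℝ)
    (hM : ContDiff ℝ (⊤ : ℕ∞) fun q : ℝ × ℝ => M q.1 q.2) (hMpos : ∀ a b, 0 < M a b)
    (hK : ContDiff ℝ (⊤ : ℕ∞) fun q : ℝ × ℝ => K q.1 q.2) (hKpos : ∀ a b, 0 < K a b)
    (hη : ContDiff ℝ (⊤ : ℕ∞) fun q : ℝ × ℝ => η q.1 q.2) (hηpos : ∀ a b, 0 < η a b)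
    (φ μ θ p : ℝ → (Fin d → ℝ) → ℝ)
    (u : ℝ → (Fin d → ℝ) → Fin d → ℝ)
    (Q : ℝ → (Fin d → ℝ) → ℝ) (b : ℝ → (Fin d → ℝ) → Fin d → ℝ)
    (hφ : ContDiff ℝ (⊤ : ℕ∞) fun q : ℝ × (Fin d → ℝ) => φ q.1 q.2)
    (hμsm : ContDiff ℝ (⊤ : ℕ∞) fun q : ℝ × (Fin d → ℝ) => μ q.1 q.2)
    (hθsm : ContDiff ℝ (⊤ : ℕ∞) fun q : ℝ × (Fin d → ℝ) => θ q.1 q.2)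
    (hpsm : ContDiff ℝ (⊤ : ℕ∞) fun q : ℝ × (Fin d → ℝ) => p q.1 q.2)
    (husm : ContDiff ℝ (⊤ : ℕ∞) fun q : ℝ × (Fin d → ℝ) => u q.1 q.2)
    (hQsm : ContDiff ℝ (⊤ : ℕ∞) fun q : ℝ × (Fin d → ℝ) => Q q.1 q.2)
    (hbsm : ContDiff ℝ (⊤ : ℕ∞) fun q : ℝ × (Fin d → ℝ) => b q.1 q.2)
    (hθpos : ∀ t x, 0 < θ t x)
    (hφper : ∀ t, SpacePeriodic L (φ t))
    (hμper : ∀ t, SpacePeriodic L (μ t))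
    (hθper : ∀ t, SpacePeriodic L (θ t))
    (hpper : ∀ t, SpacePeriodic L (p t))
    (huper : ∀ t j, SpacePeriodic L fun x => u t x j)
    (hQper : ∀ t, SpacePeriodic L (Q t))
    (hbper : ∀ t j, SpacePeriodic L fun x => b t x j)
    -- (V1)
    (hV1 : ∀ t ∈ Set.Ioo (0 : ℝ) T,
      ∀ ψ : (Fin d → ℝ) → ℝ, ContDiff ℝ (⊤ : ℕ∞) ψ → SpacePeriodic L ψ →
        (∫ x in box L, dt φ t x * ψ x)
            + (∫ x in box L, dot (u t x) (grad (φ t) x) * ψ x)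
          = -∫ x in box L, M (φ t x) (θ t x) / θ t x * μ t x * ψ x)
    -- (V2)
    (hV2 : ∀ t ∈ Set.Ioo (0 : ℝ) T,
      ∀ ξ : (Fin d → ℝ) → ℝ, ContDiff ℝ (⊤ : ℕ∞) ξ → SpacePeriodic L ξ →
        (∫ x in box L, μ t x * ξ x)
          = (∫ x in box L, ∑ i, grad G (grad (φ t) x) i *
              (θ t x * pd i ξ x + ξ x * pd i (θ t) x))
            + ∫ x in box L, deriv (fun a => f a (θ t x)) (φ t x) * ξ x)
    -- (V3)
    (hV3 : ∀ t ∈ Set.Ioo (0 : ℝ) T,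
      ∀ ω : (Fin d → ℝ) → ℝ, ContDiff ℝ (⊤ : ℕ∞) ω → SpacePeriodic L ω →
        (∫ x in box L, dt (entS G f φ θ) t x * ω x)
            - (∫ x in box L, entS G f φ θ t x * dot (u t x) (grad ω x))
          = (∫ x in box L,
              M (φ t x) (θ t x) / (θ t x) ^ 2 * (μ t x) ^ 2 * ω x)
            + (∫ x in box L, K (φ t x) (θ t x) / (θ t x) ^ 2 *
                ∑ i, pd i (θ t) x *
                  (ω x / (θ t x) ^ 2 * pd i (θ t) x - (θ t x)⁻¹ * pd i ω x))
            + (∫ x in box L, η (φ t x) (θ t x) / θ t x *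
                (∑ i, ∑ j, (symGrad (u t) x i j) ^ 2) * ω x)
            + (∫ x in box L, ∑ i,
                (grad G (grad (φ t) x) i * dt φ t x
                  + grad G (grad (φ t) x) i * dot (grad (φ t) x) (u t x)) * pd i ω x)
            + ∫ x in box L, Q t x * ω x / θ t x)
    -- (V4)
    (hV4 : ∀ t ∈ Set.Ioo (0 : ℝ) T,
      ∀ v : (Fin d → ℝ) → Fin d → ℝ, ContDiff ℝ (⊤ : ℕ∞) v →
        (∀ j, SpacePeriodic L fun x => v x j) →
        (∫ x in box L, ∑ j, dt (fun s y => u s y j) t x * v x j)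
            + ((1 / 2) * (∫ x in box L,
                  ∑ j, (∑ i, u t x i * pd i (fun y => u t y j) x) * v x j)
                - (1 / 2) * ∫ x in box L,
                  ∑ j, (∑ i, u t x i * pd i (fun y => v y j) x) * u t x j)
          = -(∫ x in box L, η (φ t x) (θ t x) *
                ∑ i, ∑ j, symGrad (u t) x i j * symGrad v x i j)
            + (∫ x in box L, p t x * divg v x)
            + (∫ x in box L, dot (b t x) (v x))
            - ∫ x in box L, ∑ j,
                (dot (grad G (grad (φ t) x)) (grad (θ t) x) * pd j (φ t) x
                  + entS G f φ θ t x * pd j (θ t) x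
                  - μ t x * pd j (φ t) x) * v x j)
    -- (V5)
    (hV5 : ∀ t ∈ Set.Ioo (0 : ℝ) T,
      ∀ q : (Fin d → ℝ) → ℝ, ContDiff ℝ (⊤ : ℕ∞) q → SpacePeriodic L q →
        (∫ x in box L, q x) = 0 →
        (∫ x in box L, divg (u t) x * q x) = 0)
    :
    ∀ t ∈ Set.Ioo (0 : ℝ) T,
      deriv (fun s => ∫ x in box L, entS G f φ θ s x) t
        = (∫ x in box L,
            (M (φ t x) (θ t x) * (μ t x / θ t x) ^ 2
              + K (φ t x) (θ t x) * ∑ i, (pd i (fun z => (θ t z)⁻¹) x) ^ 2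
              + η (φ t x) (θ t x) / θ t x * ∑ i, ∑ j, (symGrad (u t) x i j) ^ 2))
          + ∫ x in box L, Q t x / θ t x ∧
      0 ≤ ∫ x in box L,
            (M (φ t x) (θ t x) * (μ t x / θ t x) ^ 2
              + K (φ t x) (θ t x) * ∑ i, (pd i (fun z => (θ t z)⁻¹) x) ^ 2
              + η (φ t x) (θ t x) / θ t x * ∑ i, ∑ j, (symGrad (u t) x i j) ^ 2) := by
  intro t ht
  refine ⟨?_, ?_⟩
  · have hB := isCompact_box L
    have hne : ∀ x, θ t x ≠ 0 := fun x => (hθpos t x).ne'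
    have slice : ∀ {E : Type} [TopologicalSpace E] {g : ℝ → (Fin d → ℝ) → E},
        (Continuous fun q : ℝ × (Fin d → ℝ) => g q.1 q.2) → Continuous (g t) := fun h =>
      h.comp (f := fun x => (t, x)) (by fun_prop)
    have cφ := slice hφ.continuous
    have cθ := slice hθsm.continuous
    have cμ := slice hμsm.continuous
    have cM : Continuous fun x => M (φ t x) (θ t x) := hM.continuous.comp (cφ.prodMk cθ)
    have cK : Continuous fun x => K (φ t x) (θ t x) := hK.continuous.comp (cφ.prodMk cθ)
    have cη : Continuous fun x => η (φ t x) (θ t x) := hη.continuous.comp (cφ.prodMk cθ)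
    have cdθ : ∀ i, Continuous fun x => pd i (θ t) x := fun i =>
      slice (g := fun s x => pd i (θ s) x) (contDiff_pd hθsm i).continuous
    have cdu : ∀ i j, Continuous fun x => pd i (fun y => u t y j) x := fun i j =>
      slice (g := fun s x => pd i (fun y => u s y j) x)
        (contDiff_pd (g := fun s y => u s y j) (contDiff_pi.1 husm j) i).continuous
    have cD : ∀ i j, Continuous fun x => symGrad (u t) x i j := fun i j =>
      ((cdu i j).add (cdu j i)).div_const 2
    have hpd : ∀ i x, pd i (fun z => (θ t z)⁻¹) x = -pd i (θ t) x / θ t x ^ 2 := fun i x =>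
      pd_inv ((hθsm.comp (contDiff_const.prodMk contDiff_id) :
        ContDiff ℝ (⊤ : ℕ∞) (θ t)).differentiable (by simp) x) (hne x) i
    have cdinv : ∀ i, Continuous fun x => pd i (fun z => (θ t z)⁻¹) x := fun i => by
      simp only [hpd]
      exact (cdθ i).neg.div (cθ.pow 2) fun x => pow_ne_zero 2 (hne x)
    have i1 : IntegrableOn (fun x => M (φ t x) (θ t x) * (μ t x / θ t x) ^ 2) (box L) :=
      (cM.mul ((cμ.div cθ hne).pow 2)).continuousOn.integrableOn_compact hB
    have i2 : IntegrableOn (fun x => K (φ t x) (θ t x) *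
        ∑ i, (pd i (fun z => (θ t z)⁻¹) x) ^ 2) (box L) :=
      (cK.mul (continuous_finsetSum _ fun i _ =>
        (cdinv i).pow 2)).continuousOn.integrableOn_compact hB
    have i3 : IntegrableOn (fun x => η (φ t x) (θ t x) / θ t x *
        ∑ i, ∑ j, (symGrad (u t) x i j) ^ 2) (box L) :=
      ((cη.div cθ hne).mul (continuous_finsetSum _ fun i _ => continuous_finsetSum _ fun j _ =>
        (cD i j).pow 2)).continuousOn.integrableOn_compact hB
    have h3 := hV3 t ht (fun _ => 1) contDiff_const (fun _ _ => rfl)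
    have hz : ∀ (i : Fin d) x, pd i (fun _ : Fin d → ℝ => (1 : ℝ)) x = 0 := fun i x => by simp [pd]
    simp only [grad, dot, hz, mul_zero, sub_zero, mul_one, Finset.sum_const_zero,
      integral_zero, add_zero] at h3
    have i12 : IntegrableOn (fun x => M (φ t x) (θ t x) * (μ t x / θ t x) ^ 2
        + K (φ t x) (θ t x) * ∑ i, (pd i (fun z => (θ t z)⁻¹) x) ^ 2) (box L) := i1.add i2
    rw [deriv_setIntegral_of_contDiff (contDiff_entS hG hf hφ hθsm hθpos) hB, h3,
      integral_add i12 i3, integral_add i1 i2]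
    have e1 : ∀ x, M (φ t x) (θ t x) / θ t x ^ 2 * μ t x ^ 2
        = M (φ t x) (θ t x) * (μ t x / θ t x) ^ 2 := fun x => by
      ring
    have e2 : ∀ x, K (φ t x) (θ t x) / θ t x ^ 2 *
          ∑ i, pd i (θ t) x * (1 / θ t x ^ 2 * pd i (θ t) x)
        = K (φ t x) (θ t x) * ∑ i, (pd i (fun z => (θ t z)⁻¹) x) ^ 2 := fun x => by
      simp only [hpd, Finset.mul_sum]
      exact Finset.sum_congr rfl fun i _ => by ring
    simp only [e1, e2]
  · refine integral_nonneg fun x => ?_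
    have h1 := (hMpos (φ t x) (θ t x)).le
    have h2 := (hKpos (φ t x) (θ t x)).le
    have h3 := (hηpos (φ t x) (θ t x)).le
    have h4 := (hθpos t x).le
    have h5 : 0 ≤ ∑ i, (pd i (fun z => (θ t z)⁻¹) x) ^ 2 := Finset.sum_nonneg fun i _ => sq_nonneg _
    have h6 : 0 ≤ ∑ i, ∑ j, (symGrad (u t) x i j) ^ 2 :=
      Finset.sum_nonneg fun i _ => Finset.sum_nonneg fun j _ => sq_nonneg _
    simp only [Pi.zero_apply]
    positivity
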